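/- arXiv:1406.1405 — 2 statements merged into one kernel-verified Lean document; each statement's English description precedes it below -/
import Mathlib

section
/- For every ordinal α, the space ω_{α+1}^ω can be partitioned into ℵ_{α+1} pairwise disjoint subsets, each homeomorphic (as a subspace) to ω_α^ω. -/
universe u

/-!
Well-order `ω_{α+1}` and fix `c < ω_{α+1}` with `ℵ_α` predecessors. Sort the sequences `x` by the
least `β > c` that strictly bounds all `x k`; this `β` exists because `ℵ_{α+1}` is regular, and the
values it takes are cofinal, hence there are `ℵ_{α+1}` of them.

If `x₀` lies in the part of `β`, then a sequence `x` lies in it exactly when all its letters are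
below `β` and, for each `n` with `c < x₀ n`, some letter of `x` is at least `x₀ n`. So the part is
the set of sequences over an alphabet of size `ℵ_α` that meet each of countably many nonempty sets
`Q n` of letters. To code such a sequence by a point of `ω_α^ω`, cut it into words, the `n`-th of
which goes on just until `Q n` has been met by the sequence: given the earlier words, there are
exactly `ℵ_α` candidates for the `n`-th one, and none of them is an initial segment of another.
-/

section BaireSpace

open PiNat Set Topology

variable {α β : Type*}

theorem res_suffix_res (x : ℕ → α) {m n : ℕ} (h : m ≤ n) : res x m <:+ res x n := by
  induction n, h using Nat.le_induction with
  | base => exact List.suffix_rfl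
  | succ n _ ih => exact ih.trans (List.suffix_cons _ _)

theorem mem_res {x : ℕ → α} {n : ℕ} {a : α} : a ∈ res x n ↔ ∃ k < n, x k = a := by
  induction n with
  | zero => simp
  | succ n ih => simp only [res_succ, List.mem_cons, ih, Nat.exists_lt_succ_right, or_comm, eq_comm]

theorem res_length_eq_of_suffix_res {x : ℕ → α} {n : ℕ} {l : List α} (h : l <:+ res x n) :
    res x l.length = l := by
  have hle : l.length ≤ n := by simpa using h.length_le
  exact (List.suffix_of_suffix_length_le (res_suffix_res x hle) h (by simp)).eq_of_length (by simp)

theorem res_length_eq_of_getElem_reverse {x : ℕ → α} {l : List α}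
    (h : ∀ k (hk : k < l.reverse.length), l.reverse[k] = x k) : res x l.length = l := by
  induction l with
  | nil => rfl
  | cons a l ih =>
    rw [List.length_cons, res_succ, ih fun k hk => ?_, ← h l.length (by simp)]
    · simp
    · rw [← h k (by simpa using (List.length_reverse (as := l) ▸ hk).le)]
      simp only [List.reverse_cons, List.getElem_append_left hk]

theorem exists_forall_res_length_eq {l : ℕ → List α} (hl : ∀ n, l n <:+ l (n + 1))
    (hlen : ∀ n, n ≤ (l n).length) : ∃ x, ∀ n, res x (l n).length = l n := by
  have hmono : ∀ {m n}, m ≤ n → (l m).reverse <+: (l n).reverse := fun h =>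
    List.reverse_prefix.2 (Nat.le_induction List.suffix_rfl (fun n _ ih => ih.trans (hl n)) _ h)
  have hlt : ∀ k, k < (l (k + 1)).reverse.length := fun k => by simpa using hlen (k + 1)
  refine ⟨fun k => (l (k + 1)).reverse[k]'(hlt k), fun n =>
    res_length_eq_of_getElem_reverse fun k hk => ?_⟩
  rcases le_total n (k + 1) with h | h
  · exact (hmono h).getElem hk
  · exact ((hmono h).getElem (hlt k)).symm

theorem hasBasis_nhds_cylinder [TopologicalSpace α] [DiscreteTopology α] (x : ℕ → α) :
    (𝓝 x).HasBasis (fun _ : ℕ => True) (cylinder x) := by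
  refine ⟨fun s => ?_⟩
  rw [(isTopologicalBasis_cylinders fun _ : ℕ => α).mem_nhds_iff]
  constructor
  · rintro ⟨_, ⟨y, n, rfl⟩, hx, hs⟩
    exact ⟨n, trivial, (mem_cylinder_iff_eq.1 hx).trans_subset hs⟩
  · rintro ⟨n, -, hs⟩
    exact ⟨_, ⟨x, n, rfl⟩, self_mem_cylinder x n, hs⟩

/-- A Lusin scheme of finite words: a tree of words, indexed by lists over `β`, in which every child
properly extends its parent and distinct children of a node are never initial segments of one
another. As in `PiNat.res`, lists have their latest letter first, so that initial segments are
suffixes. The cylinders of the words form a Lusin scheme of sets with vanishing diameter. -/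
structure IsLusinScheme (T : List β → List α) : Prop where
  suffix_cons : ∀ s b, T s <:+ T (b :: s)
  length_lt_cons : ∀ s b, (T s).length < (T (b :: s)).length
  eq_of_suffix : ∀ {s b b'}, T (b :: s) <:+ T (b' :: s) → b = b'

namespace IsLusinScheme

variable {T : List β → List α}

theorem length_le (hT : IsLusinScheme T) : ∀ s, s.length ≤ (T s).length
  | [] => Nat.zero_le _
  | b :: s => (hT.length_le s).trans_lt (hT.length_lt_cons s b)

theorem eq_of_suffix_of_suffix (hT : IsLusinScheme T) {l : List α} :
    ∀ {s s' : List β}, s.length = s'.length → T s <:+ l → T s' <:+ l → s = s'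
  | [], [], _, _, _ => rfl
  | b :: s, b' :: s', hlen, h, h' => by
    obtain rfl : s = s' := hT.eq_of_suffix_of_suffix (Nat.succ.inj hlen)
      ((hT.suffix_cons s b).trans h) ((hT.suffix_cons s' b').trans h')
    congr 1
    exact (List.suffix_or_suffix_of_suffix h h').elim hT.eq_of_suffix
      fun h => (hT.eq_of_suffix h).symm

theorem exists_branch (hT : IsLusinScheme T) (b : ℕ → β) :
    ∃ x, ∀ n, res x (T (res b n)).length = T (res b n) :=
  exists_forall_res_length_eq (fun n => hT.suffix_cons (res b n) (b n)) fun n => by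
    simpa using hT.length_le (res b n)

/-- The infinite word whose initial segments include all words of the scheme along `b`. -/
noncomputable def branch (hT : IsLusinScheme T) (b : ℕ → β) : ℕ → α :=
  (hT.exists_branch b).choose

theorem res_branch (hT : IsLusinScheme T) (b : ℕ → β) (n : ℕ) :
    res (hT.branch b) (T (res b n)).length = T (res b n) :=
  (hT.exists_branch b).choose_spec n

theorem le_length_res (hT : IsLusinScheme T) (b : ℕ → β) (n : ℕ) : n ≤ (T (res b n)).length := by
  simpa using hT.length_le (res b n)

theorem res_branch_eq_of_res_eq (hT : IsLusinScheme T) {b b' : ℕ → β} {n : ℕ}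
    (h : res b' n = res b n) : res (hT.branch b') n = res (hT.branch b) n := by
  have hlong := (hT.res_branch b' n).trans ((congrArg T h).trans (hT.res_branch b n).symm)
  rw [h] at hlong
  exact res_eq_res.2 fun k hk => res_eq_res.1 hlong (hk.trans_le (hT.le_length_res b n))

theorem res_eq_of_res_branch_eq (hT : IsLusinScheme T) {b b' : ℕ → β} {n : ℕ}
    (h : res (hT.branch b') (T (res b n)).length = T (res b n)) : res b' n = res b n := by
  let N := max (T (res b' n)).length (T (res b n)).length
  have hsuffix' : T (res b' n) <:+ res (hT.branch b') N := by
    rw [← hT.res_branch b' n]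
    exact res_suffix_res _ (le_max_left _ _)
  have hsuffix : T (res b n) <:+ res (hT.branch b') N := by
    rw [← h]
    exact res_suffix_res _ (le_max_right _ _)
  exact hT.eq_of_suffix_of_suffix (by simp) hsuffix' hsuffix

theorem branch_injective (hT : IsLusinScheme T) : Function.Injective hT.branch := fun _ b' h =>
  res_injective <| funext fun n => hT.res_eq_of_res_branch_eq (h ▸ hT.res_branch b' n)

theorem isEmbedding_branch [TopologicalSpace α] [DiscreteTopology α] [TopologicalSpace β]
    [DiscreteTopology β] (hT : IsLusinScheme T) : IsEmbedding hT.branch := by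
  refine ⟨isInducing_iff_nhds.2 fun b => le_antisymm ?_ ?_, hT.branch_injective⟩
  · refine (((hasBasis_nhds_cylinder b).tendsto_iff (hasBasis_nhds_cylinder _)).2
      fun n _ => ⟨n, trivial, fun b' hb' => ?_⟩).le_comap
    rw [cylinder_eq_res] at hb' ⊢
    exact hT.res_branch_eq_of_res_eq hb'
  · refine (((hasBasis_nhds_cylinder _).comap _).le_basis_iff (hasBasis_nhds_cylinder b)).2
      fun n _ => ⟨(T (res b n)).length, trivial, fun b' hb' => ?_⟩
    rw [cylinder_eq_res, mem_preimage, mem_ofPred_eq, hT.res_branch] at hb'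
    rw [cylinder_eq_res]
    exact hT.res_eq_of_res_branch_eq hb'

theorem mem_range_branch (hT : IsLusinScheme T) {x : ℕ → α} (hnil : res x (T []).length = T [])
    (hcons : ∀ s, res x (T s).length = T s → ∃ b, res x (T (b :: s)).length = T (b :: s)) :
    x ∈ range hT.branch := by
  have : Nonempty β := ⟨(hcons [] hnil).choose⟩
  choose! child hchild using hcons
  let node : ℕ → List β := Nat.rec [] fun _ s => child s :: s
  let b : ℕ → β := fun n => child (node n)
  have hnode : ∀ n, res b n = node n := fun n => by
    induction n with
    | zero => rfl
    | succ n ih => rw [res_succ, ih]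
  have hx : ∀ n, res x (T (res b n)).length = T (res b n) := fun n => by
    rw [hnode]
    induction n with
    | zero => exact hnil
    | succ n ih => exact hchild _ ih
  refine ⟨b, funext fun k => res_eq_res.1 ((hT.res_branch b (k + 1)).trans (hx (k + 1)).symm) ?_⟩
  exact hT.le_length_res b (k + 1)

end IsLusinScheme

end BaireSpace

section HittingSets

open Cardinal PiNat Set Topology

variable {α : Type*}

/-- The words whose latest letter, which stands first as in `PiNat.res`, is their only letter in
`Q`: the candidates for the part of a sequence up to its first visit to `Q`. -/
def firstEntryWords (Q : Set α) : Set (List α) :=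
  {l | ∃ a v, l = a :: v ∧ a ∈ Q ∧ ∀ b ∈ v, b ∉ Q}

theorem eq_of_suffix_of_mem_firstEntryWords {Q : Set α} {l l' : List α}
    (hl : l ∈ firstEntryWords Q) (hl' : l' ∈ firstEntryWords Q) (h : l <:+ l') : l = l' := by
  obtain ⟨a, v, rfl, ha, -⟩ := hl
  obtain ⟨a', v', rfl, -, hv'⟩ := hl'
  exact (List.suffix_cons_iff.1 h).resolve_right fun h => hv' a (h.subset (by simp)) ha

theorem mk_firstEntryWords [Infinite α] {Q : Set α} (hQ : Q.Nonempty) :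
    #(firstEntryWords Q) = #α := by
  classical
  obtain ⟨c, hc⟩ := hQ
  refine le_antisymm ((mk_set_le _).trans (mk_list_eq_mk α).le) ?_
  let word (a : α) : List α := if a ∈ Q then [a] else [c, a]
  have hword (a : α) : word a ∈ firstEntryWords Q := by
    by_cases ha : a ∈ Q
    · exact ⟨a, [], if_pos ha, ha, by simp⟩
    · exact ⟨c, [a], if_neg ha, hc, by simpa using ha⟩
  have hlast (a : α) : (word a).getLast? = some a := by
    unfold word
    split_ifs <;> rfl
  refine mk_le_of_injective (f := fun a => ⟨word a, hword a⟩) fun a b h => ?_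
  exact Option.some.inj ((hlast a).symm.trans ((congrArg (·.1.getLast?) h).trans (hlast b)))

theorem exists_firstEntryWord_append_res {x : ℕ → α} {Q : Set α} {m : ℕ}
    (h : ∃ k ≥ m, x k ∈ Q) : ∃ w ∈ firstEntryWords Q, ∃ k, res x k = w ++ res x m := by
  classical
  have hbefore : ∀ j ≥ m, j ≤ Nat.find h → ∃ v, res x j = v ++ res x m ∧ ∀ b ∈ v, b ∉ Q := by
    intro j hj
    induction j, hj using Nat.le_induction with
    | base => exact fun _ => ⟨[], rfl, by simp⟩
    | succ j hmj ih =>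
      intro hj
      obtain ⟨v, hv, hvQ⟩ := ih (by omega)
      have hxj : x j ∉ Q := fun hxj => Nat.find_min h hj ⟨hmj, hxj⟩
      exact ⟨x j :: v, by simp [hv], List.forall_mem_cons.2 ⟨hxj, hvQ⟩⟩
  obtain ⟨hm, hQ⟩ := Nat.find_spec h
  obtain ⟨v, hv, hvQ⟩ := hbefore _ hm le_rfl
  exact ⟨x (Nat.find h) :: v, ⟨_, v, rfl, hQ, hvQ⟩, Nat.find h + 1, by simp [hv]⟩

/-- The letters `a` such that the word `l` followed by `a` meets `Q`. This is everything if `l`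
itself meets `Q`, and `Q` otherwise. -/
def completingLetters (Q : Set α) (l : List α) : Set α :=
  {a | ∃ b ∈ a :: l, b ∈ Q}

theorem subset_completingLetters (Q : Set α) (l : List α) : Q ⊆ completingLetters Q l :=
  fun a ha => ⟨a, List.mem_cons_self, ha⟩

theorem exists_mem_completingLetters_res {x : ℕ → α} {Q : Set α} (h : ∃ k, x k ∈ Q) (m : ℕ) :
    ∃ k ≥ m, x k ∈ completingLetters Q (res x m) := by
  obtain ⟨k, hk⟩ := h
  rcases le_or_gt m k with hmk | hkm
  · exact ⟨k, hmk, subset_completingLetters _ _ hk⟩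
  · exact ⟨m, le_rfl, x k, List.mem_cons_of_mem _ (mem_res.2 ⟨k, hkm, rfl⟩), hk⟩

/-- The tree of words whose branches are the sequences that meet every `Q n`: a node of depth `n`
is extended just until it meets `Q n`, the possible extensions being enumerated by `e`. -/
def hittingScheme {β : Type*} {Q : ℕ → Set α}
    (e : ∀ n l, β ≃ firstEntryWords (completingLetters (Q n) l)) : List β → List α
  | [] => []
  | b :: s => (e s.length (hittingScheme e s) b : List α) ++ hittingScheme e s

section hittingScheme

variable {β : Type*} {Q : ℕ → Set α} (e : ∀ n l, β ≃ firstEntryWords (completingLetters (Q n) l))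

theorem isLusinScheme_hittingScheme : IsLusinScheme (hittingScheme e) where
  suffix_cons _ _ := List.suffix_append _ _
  length_lt_cons s b := by
    obtain ⟨a, v, hw, -⟩ := (e s.length (hittingScheme e s) b).2
    simp only [hittingScheme, hw, List.length_append, List.length_cons]
    omega
  eq_of_suffix h := (e _ _).injective <| Subtype.ext <| eq_of_suffix_of_mem_firstEntryWords
    (e _ _ _).2 (e _ _ _).2 (List.suffix_append_self_iff.1 h)

theorem exists_mem_hittingScheme_cons (b : β) (s : List β) :
    ∃ a ∈ hittingScheme e (b :: s), a ∈ Q s.length := by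
  obtain ⟨a, v, hw, ⟨c, hc, hcQ⟩, -⟩ := (e s.length (hittingScheme e s) b).2
  refine ⟨c, ?_, hcQ⟩
  simp only [hittingScheme, hw, List.mem_append, List.mem_cons] at hc ⊢
  tauto

theorem range_branch_hittingScheme :
    range (isLusinScheme_hittingScheme e).branch = {x | ∀ n, ∃ k, x k ∈ Q n} := by
  refine Subset.antisymm ?_ fun x hx => ?_
  · rintro _ ⟨b, rfl⟩ n
    obtain ⟨a, ha, haQ⟩ := exists_mem_hittingScheme_cons e (b n) (res b n)
    rw [← res_succ, ← (isLusinScheme_hittingScheme e).res_branch, mem_res] at ha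
    obtain ⟨k, -, rfl⟩ := ha
    exact ⟨k, by simpa using haQ⟩
  · refine (isLusinScheme_hittingScheme e).mem_range_branch rfl fun s hs => ?_
    obtain ⟨w, hw, k, hk⟩ := exists_firstEntryWord_append_res
      (exists_mem_completingLetters_res (hx s.length) (hittingScheme e s).length)
    rw [hs] at hw hk
    obtain ⟨b, hb⟩ := (e s.length (hittingScheme e s)).surjective ⟨w, hw⟩
    refine ⟨b, res_length_eq_of_suffix_res (n := k) ?_⟩
    rw [hk, hittingScheme, hb]

end hittingScheme

theorem nonempty_homeomorph_setOf_forall_exists_mem [Infinite α] [TopologicalSpace α]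
    [DiscreteTopology α] {Q : ℕ → Set α} (hQ : ∀ n, (Q n).Nonempty) :
    Nonempty ({x : ℕ → α | ∀ n, ∃ k, x k ∈ Q n} ≃ₜ (ℕ → α)) := by
  have e (n : ℕ) (l : List α) : α ≃ firstEntryWords (completingLetters (Q n) l) :=
    (Cardinal.eq.1 (mk_firstEntryWords ((hQ n).mono (subset_completingLetters _ l)))).some.symm
  rw [← range_branch_hittingScheme e]
  exact ⟨(isLusinScheme_hittingScheme e).isEmbedding_branch.toHomeomorph.symm⟩

end HittingSets

section StrictBounds

open Cardinal Set Topology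

variable {A B : Type u}

/-- The strict upper bounds above `c` of the sequence `x`. -/
def strictBoundsAbove [Preorder A] (c : A) (x : ℕ → A) : Set A :=
  {a | c < a ∧ ∀ k, x k < a}

theorem isLeast_strictBoundsAbove_iff [LinearOrder A] {c β : A} {x : ℕ → A} :
    IsLeast (strictBoundsAbove c x) β ↔
      c < β ∧ (∀ k, x k < β) ∧ ∀ a, c < a → a < β → ∃ k, a ≤ x k := by
  simp only [IsLeast, strictBoundsAbove, mem_ofPred_eq, mem_lowerBounds, and_assoc]
  refine and_congr_right fun _ => and_congr_right fun _ => forall_congr' fun a => ?_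
  rw [← not_imp_not]
  push Not
  tauto

theorem isLeast_strictBoundsAbove_iff_of_isLeast [LinearOrder A] {c β : A} {x₀ x : ℕ → A}
    (h₀ : IsLeast (strictBoundsAbove c x₀) β) :
    IsLeast (strictBoundsAbove c x) β ↔
      (∀ k, x k < β) ∧ ∀ n, ∃ k, c < x₀ n → x₀ n ≤ x k := by
  rw [isLeast_strictBoundsAbove_iff] at h₀ ⊢
  obtain ⟨hcβ, hx₀, hleast⟩ := h₀
  refine ⟨fun ⟨_, hx, h⟩ => ⟨hx, fun n => ?_⟩, fun ⟨hx, h⟩ => ⟨hcβ, hx, fun a hca haβ => ?_⟩⟩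
  · by_cases hn : c < x₀ n
    · exact (h _ hn (hx₀ n)).imp fun k hk _ => hk
    · exact ⟨0, fun h => absurd h hn⟩
  · obtain ⟨n, hn⟩ := hleast a hca haβ
    obtain ⟨k, hk⟩ := h n
    exact ⟨k, hn.trans (hk (hca.trans_le hn))⟩

theorem nonempty_homeomorph_setOf_isLeast_strictBoundsAbove [LinearOrder A] [TopologicalSpace A]
    [DiscreteTopology A] {c β : A} [Infinite (Iio β)] {x₀ : ℕ → A}
    (h₀ : IsLeast (strictBoundsAbove c x₀) β) :
    Nonempty ({x | IsLeast (strictBoundsAbove c x) β} ≃ₜ (ℕ → Iio β)) := by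
  let ι : (ℕ → Iio β) → ℕ → A := Pi.map fun _ => Subtype.val
  have hι : IsEmbedding ι := .piMap fun _ => .subtypeVal
  have hrange : {x | IsLeast (strictBoundsAbove c x) β} ⊆ range ι := fun x hx =>
    ⟨fun k => ⟨x k, hx.1.2 k⟩, rfl⟩
  have hpre : ι ⁻¹' {x | IsLeast (strictBoundsAbove c x) β} =
      {y | ∀ n, ∃ k, y k ∈ {a : Iio β | c < x₀ n → x₀ n ≤ a}} := by
    ext y
    exact (isLeast_strictBoundsAbove_iff_of_isLeast h₀).trans (and_iff_right fun k => (y k).2)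
  obtain ⟨h⟩ := nonempty_homeomorph_setOf_forall_exists_mem (α := Iio β)
    (Q := fun n => {a | c < x₀ n → x₀ n ≤ a}) fun n => ⟨⟨x₀ n, h₀.1.2 n⟩, fun _ => le_rfl⟩
  exact ⟨(hι.homeomorphOfSubsetRange hrange).symm.trans ((Homeomorph.setCongr hpre).trans h)⟩

theorem exists_forall_mem_lt_of_mk_lt_cof [LinearOrder A] {s : Set A} (hs : #s < Order.cof A) :
    ∃ a, ∀ b ∈ s, b < a :=
  not_isCofinal_iff.1 fun h => hs.not_ge (Order.cof_le h)

theorem exists_isLeast_strictBoundsAbove [LinearOrder A] [WellFoundedLT A]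
    (hcof : ℵ₀ < Order.cof A) (c : A) (x : ℕ → A) : ∃ β, IsLeast (strictBoundsAbove c x) β := by
  have hcount : (insert c (range x)).Countable := (countable_range x).insert c
  obtain ⟨a, ha⟩ := exists_forall_mem_lt_of_mk_lt_cof (hcount.le_aleph0.trans_lt hcof)
  have hne : (strictBoundsAbove c x).Nonempty :=
    ⟨a, ha c (mem_insert _ _), fun k => ha _ (mem_insert_of_mem _ ⟨k, rfl⟩)⟩
  exact ⟨wellFounded_lt.min _ hne, wellFounded_lt.min_mem _ _,
    fun b hb => not_lt.1 (wellFounded_lt.not_lt_min _ hb)⟩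

theorem exists_mk_Iio_ge_of_lt_cof [LinearOrder A] {κ : Cardinal} (hκ : κ < Order.cof A) :
    ∃ c : A, κ ≤ #(Iio c) := by
  obtain ⟨s, rfl⟩ := le_mk_iff_exists_set.1 (hκ.le.trans (Order.cof_le_cardinalMk A))
  obtain ⟨c, hc⟩ := exists_forall_mem_lt_of_mk_lt_cof hκ
  exact ⟨c, mk_le_mk_of_subset hc⟩

theorem exists_partition_homeomorph_of_cof_eq [LinearOrder A] [WellFoundedLT A]
    [TopologicalSpace A] [DiscreteTopology A] [TopologicalSpace B] [DiscreteTopology B]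
    (hB : ℵ₀ ≤ #B) (hBA : #B < #A) (hcof : Order.cof A = #A) (hIio : ∀ a : A, #(Iio a) ≤ #B) :
    ∃ S : A → Set (ℕ → A), Pairwise (Function.onFun Disjoint S) ∧
      (∀ a, (S a).Nonempty) ∧ (⋃ a, S a) = Set.univ ∧ ∀ a, Nonempty (S a ≃ₜ (ℕ → B)) := by
  obtain ⟨c, hc⟩ := exists_mk_Iio_ge_of_lt_cof (hBA.trans_eq hcof.symm)
  choose g hg using exists_isLeast_strictBoundsAbove ((hB.trans_lt hBA).trans_eq hcof.symm) c
  have hrange : IsCofinal (range g) := fun a =>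
    ⟨g fun _ => a, mem_range_self _, ((hg fun _ => a).1.2 0).le⟩
  obtain ⟨f⟩ : Nonempty (A ≃ range g) :=
    Cardinal.eq.1 ((hcof.ge.trans (Order.cof_le hrange)).antisymm (mk_set_le _))
  have hfiber (β : A) : g ⁻¹' {β} = {x | IsLeast (strictBoundsAbove c x) β} :=
    Set.ext fun x => ⟨fun h => h ▸ hg x, (hg x).unique⟩
  refine ⟨fun a => g ⁻¹' {(f a : A)}, fun a b hab => pairwise_disjoint_fiber g
      (Subtype.val_injective.ne (f.injective.ne hab)), fun a => (f a).2,
    eq_univ_of_forall fun x => mem_iUnion.2 ⟨f.symm ⟨g x, x, rfl⟩, by simp⟩, fun a => ?_⟩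
  obtain ⟨x₀, hx₀⟩ := (f a).2
  have h₀ : IsLeast (strictBoundsAbove c x₀) (f a : A) := hx₀ ▸ hg x₀
  have hβ : #(Iio (f a : A)) = #B :=
    (hIio _).antisymm (hc.trans (mk_le_mk_of_subset (Iio_subset_Iio h₀.1.1.le)))
  have : Infinite (Iio (f a : A)) := infinite_iff.2 (hB.trans_eq hβ.symm)
  obtain ⟨e⟩ := Cardinal.eq.1 hβ
  obtain ⟨h⟩ := nonempty_homeomorph_setOf_isLeast_strictBoundsAbove h₀
  exact ⟨((Homeomorph.setCongr (hfiber _)).trans h).trans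
    (.piCongrRight fun _ => e.toHomeomorphOfDiscrete)⟩

end StrictBounds

/-- For every ordinal `o`, the space ω_{o+1}^ω can be partitioned into ℵ_{o+1} pairwise
disjoint subsets, each homeomorphic to ω_o^ω. -/
theorem stmt_4 (o : Ordinal) (A B : Type u)
    [TopologicalSpace A] [DiscreteTopology A] [TopologicalSpace B] [DiscreteTopology B]
    (hA : Cardinal.mk A = Cardinal.aleph (o + 1)) (hB : Cardinal.mk B = Cardinal.aleph o) :
    ∃ S : A → Set (ℕ → A), Pairwise (Function.onFun Disjoint S) ∧
      (∀ a, (S a).Nonempty) ∧ (⋃ a, S a) = Set.univ ∧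
      ∀ a, Nonempty (S a ≃ₜ (ℕ → B)) := by
  obtain ⟨_, _, hord⟩ := Cardinal.exists_ord_eq_type_lt A
  have hB₀ : Cardinal.aleph0 ≤ Cardinal.mk B := hB ▸ Cardinal.aleph0_le_aleph o
  have hsucc : Cardinal.mk A = Order.succ (Cardinal.mk B) := by
    rw [hA, hB, Cardinal.succ_aleph]
  have hcof : Order.cof A = Cardinal.mk A := by
    rw [← Ordinal.cof_type, ← hord, hsucc]
    exact (Cardinal.isRegular_succ hB₀).cof_ord
  refine exists_partition_homeomorph_of_cof_eq hB₀ (hsucc ▸ Order.lt_succ _) hcof fun a => ?_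
  exact Order.lt_succ_iff.1 (hsucc ▸ Cardinal.mk_Iio_lt a hord)
end

section
/- If the Baire space ω^ω can be partitioned into κ many Borel sets, then there is a continuous bijection from κ × ω^ω onto ω^ω; conversely, if there is a continuous bijection from ω_n^ω onto ω^ω (for n < ω), then ω^ω can be partitioned into ℵ_n Borel sets. -/
/-!
A Borel subset `B` of Baire space is the injective projection of a closed `F ⊆ ω^ω × ω^ω`. In the
tree of `F × ω^ω` every node has infinitely many successors, because the last coordinate is free,
so renaming letters node by node turns `ω^ω` into `F × ω^ω`, and projecting maps `ω^ω` continuously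
and bijectively onto `B × ω^ω`. Gluing over the pieces of a partition gives `κ × ω^ω → ω^ω × ω^ω`.

Conversely, `ω_n^ω` splits into `ℵ_n` measurable sets of sequences with entries in a fixed countable
alphabet. For `n + 1`, every sequence is bounded in `ω_{n+1}`; sort the sequences by their least
strict upper bound `a`, and then by the piece that contains them in the partition for the initial
segment at `a`. A continuous bijection onto `ω^ω` maps each piece to a Borel set by Lusin–Souslin.
-/

open Set Function PiNat
open scoped Cardinal

universe u v w

section InjectiveProjection

variable {X : Type*} [TopologicalSpace X]

/-- `s` is the bijective image, under the projection to `X`, of a closed subset of `X × ω^ω`.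
For `X` zero-dimensional and second countable all Borel sets are of this form. -/
def IsInjectiveProjection (s : Set X) : Prop :=
  ∃ G : Set (X × (ℕ → ℕ)), IsClosed G ∧ InjOn Prod.fst G ∧ Prod.fst '' G = s

namespace IsInjectiveProjection

theorem of_isClosed {s : Set X} (hs : IsClosed s) : IsInjectiveProjection s := by
  refine ⟨s ×ˢ {0}, hs.prod isClosed_singleton, ?_, fst_image_prod s (singleton_nonempty 0)⟩
  rintro ⟨x, y⟩ ⟨-, rfl⟩ ⟨x', y'⟩ ⟨-, rfl⟩ rfl
  rfl

theorem iInter {s : ℕ → Set X} (hs : ∀ n, IsInjectiveProjection (s n)) :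
    IsInjectiveProjection (⋂ n, s n) := by
  choose G hclosed hinj himage using hs
  refine ⟨{p | ∀ n, (p.1, fun k => p.2 (Nat.pair n k)) ∈ G n}, ?_, ?_, ?_⟩
  · rw [ofPred_forall]
    exact isClosed_iInter fun n => (hclosed n).preimage (by fun_prop)
  · rintro ⟨x, y⟩ hy ⟨x', y'⟩ hy' rfl
    refine Prod.ext rfl (funext fun m => ?_)
    have hrow := congrArg Prod.snd (hinj m.unpair.1 (hy _) (hy' _) rfl)
    simpa only [Nat.pair_unpair] using congrFun hrow m.unpair.2
  · ext x
    simp only [← himage, mem_iInter, mem_image, Prod.exists, exists_and_right, exists_eq_right,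
      mem_ofPred_eq]
    refine ⟨fun ⟨y, hy⟩ n => ⟨_, hy n⟩, fun h => ?_⟩
    choose y hy using h
    refine ⟨fun m => y m.unpair.1 m.unpair.2, fun n => ?_⟩
    simpa only [Nat.unpair_pair] using hy n

theorem iUnion {s : ℕ → Set X} (hs : ∀ n, IsInjectiveProjection (s n))
    (hdisj : Pairwise (Disjoint on s)) : IsInjectiveProjection (⋃ n, s n) := by
  choose G hclosed hinj himage using hs
  refine ⟨{p | (p.1, fun k => p.2 (k + 1)) ∈ G (p.2 0)}, ?_, ?_, ?_⟩
  · have hfiber : {p : X × (ℕ → ℕ) | (p.1, fun k => p.2 (k + 1)) ∈ G (p.2 0)} =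
        ⋂ n, {p | p.2 0 = n → (p.1, fun k => p.2 (k + 1)) ∈ G n} := by
      ext p
      simp
    rw [hfiber]
    refine isClosed_iInter fun n => isClosed_imp ?_ ((hclosed n).preimage (by fun_prop))
    exact (isOpen_discrete {n}).preimage (f := fun p : X × (ℕ → ℕ) => p.2 0) (by fun_prop)
  · rintro ⟨x, y⟩ hy ⟨_, y'⟩ hy' rfl
    have hhead : y 0 = y' 0 := hdisj.eq <| not_disjoint_iff.2
      ⟨x, himage (y 0) ▸ ⟨_, hy, rfl⟩, himage (y' 0) ▸ ⟨_, hy', rfl⟩⟩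
    have hy_tail : (x, fun k => y' (k + 1)) ∈ G (y 0) := by
      rw [hhead]
      exact hy'
    have htail := congrArg Prod.snd (hinj (y 0) hy hy_tail rfl)
    refine Prod.ext rfl (funext fun m => ?_)
    cases m with
    | zero => exact hhead
    | succ k => exact congrFun htail k
  · ext x
    simp only [← himage, mem_iUnion, mem_image, Prod.exists, exists_and_right, exists_eq_right,
      mem_ofPred_eq]
    refine ⟨fun ⟨y, hy⟩ => ⟨y 0, _, hy⟩, fun ⟨n, y, hy⟩ => ⟨fun m => Nat.casesOn m n y, hy⟩⟩

theorem of_measurableSet [SecondCountableTopology X] [MeasurableSpace X] [BorelSpace X]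
    (hX : TopologicalSpace.IsTopologicalBasis {s : Set X | IsClopen s}) {s : Set X}
    (hs : MeasurableSet s) : IsInjectiveProjection s := by
  suffices IsInjectiveProjection s ∧ IsInjectiveProjection sᶜ from this.1
  have hgen := (BorelSpace.measurable_eq (α := X)).trans hX.borel_eq_generateFrom
  have hpi : IsPiSystem {s : Set X | IsClopen s} := fun _ hs _ ht _ => hs.inter ht
  induction s, hs using MeasurableSpace.induction_on_inter hgen hpi with
  | empty => exact ⟨of_isClosed isClosed_empty, of_isClosed (by simp)⟩
  | basic t ht => exact ⟨of_isClosed ht.isClosed, of_isClosed ht.compl.isClosed⟩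
  | compl t _ ih => exact ⟨ih.2, (compl_compl t).symm ▸ ih.1⟩
  | iUnion t hdisj _ ih =>
    refine ⟨iUnion (fun n => (ih n).1) hdisj, ?_⟩
    rw [compl_iUnion]
    exact iInter fun n => (ih n).2

end IsInjectiveProjection

end InjectiveProjection

section Sequences

variable {A K : Type*}

/-- The letters labelling the successors of the word `s` in the tree of initial segments of members
of `C`. As for `PiNat.res`, words are written in reverse, with the last letter at the head. -/
def nextLetters (C : Set (ℕ → A)) (s : List A) : Set A :=
  {a | ∃ x ∈ C, res x (s.length + 1) = a :: s}

theorem mem_nextLetters_res {C : Set (ℕ → A)} {x : ℕ → A} {n : ℕ} {a : A} :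
    a ∈ nextLetters C (res x n) ↔ ∃ y ∈ C, res y n = res x n ∧ y n = a := by
  simp only [nextLetters, mem_ofPred_eq, res_length, res_succ, List.cons.injEq, and_comm]

/-- The letter-by-letter renaming of words over `K` to words over `A` in which the word `s` obtained
so far selects the renaming `d s` of the next letter. Words are reversed, as for `PiNat.res`. -/
def renameWord (d : List A → K → A) : List K → List A
  | [] => []
  | k :: s => d (renameWord d s) k :: renameWord d s

/-- The map on infinite sequences whose action on initial segments is `renameWord d`. When every
`d s` is injective, it identifies `ℕ → K` with the branches of the tree over `A` in which the
successors of the word `s` are labelled by `range (d s)`. -/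
def renameLetters (d : List A → K → A) (z : ℕ → K) (n : ℕ) : A :=
  d (renameWord d (res z n)) (z n)

theorem res_renameLetters (d : List A → K → A) (z : ℕ → K) (n : ℕ) :
    res (renameLetters d z) n = renameWord d (res z n) := by
  induction n with
  | zero => rfl
  | succ n ih => simp only [res_succ, renameWord, ih, renameLetters]

theorem renameLetters_apply (d : List A → K → A) (z : ℕ → K) (n : ℕ) :
    renameLetters d z n = d (res (renameLetters d z) n) (z n) := by
  rw [res_renameLetters, renameLetters]

theorem isLocallyConstant_res [TopologicalSpace K] [DiscreteTopology K] (n : ℕ) :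
    IsLocallyConstant fun z : ℕ → K => res z n := by
  induction n with
  | zero => exact IsLocallyConstant.const _
  | succ n ih =>
    exact ((IsLocallyConstant.iff_continuous _).2 (continuous_apply n)).comp₂ ih List.cons

theorem continuous_renameLetters [TopologicalSpace K] [DiscreteTopology K] [TopologicalSpace A]
    (d : List A → K → A) : Continuous (renameLetters d) :=
  continuous_pi fun n => ((isLocallyConstant_res n).comp₂
    ((IsLocallyConstant.iff_continuous _).2 (continuous_apply n))
    fun s k => d (renameWord d s) k).continuous

theorem mem_of_forall_exists_res_eq [TopologicalSpace A] [DiscreteTopology A] {C : Set (ℕ → A)}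
    (hC : IsClosed C) {x : ℕ → A} (h : ∀ n, ∃ y ∈ C, res y n = res x n) : x ∈ C := by
  rw [← hC.closure_eq, (isTopologicalBasis_cylinders fun _ : ℕ => A).mem_closure_iff]
  rintro _ ⟨w, n, rfl⟩ hx
  obtain ⟨y, hyC, hy⟩ := h n
  rw [cylinder_eq_res] at hx ⊢
  exact ⟨y, hy.trans hx, hyC⟩

theorem isTopologicalBasis_isClopen_sequences [TopologicalSpace A] [DiscreteTopology A] :
    TopologicalSpace.IsTopologicalBasis {s : Set (ℕ → A) | IsClopen s} := by
  refine (isTopologicalBasis_cylinders fun _ : ℕ => A).of_isOpen_of_subset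
    (fun _ hs => hs.isOpen) ?_
  rintro _ ⟨x, n, rfl⟩
  have hres := (isLocallyConstant_res (K := A) n).isClopen_fiber (res x n)
  rwa [← cylinder_eq_res] at hres

section RenameLetters

variable {C : Set (ℕ → A)} {d : List A → K → A}

theorem exists_mem_res_eq_res_renameLetters (hC : C.Nonempty)
    (hd : ∀ x ∈ C, ∀ n, MapsTo (d (res x n)) univ (nextLetters C (res x n))) (z : ℕ → K) (n : ℕ) :
    ∃ x ∈ C, res x n = res (renameLetters d z) n := by
  induction n with
  | zero => exact hC.imp fun x hx => ⟨hx, rfl⟩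
  | succ n ih =>
    obtain ⟨x, hx, hxz⟩ := ih
    obtain ⟨y, hy, hyx, hyn⟩ := mem_nextLetters_res.1 (hd x hx n (mem_univ (z n)))
    exact ⟨y, hy, by rw [res_succ, res_succ, hyx, hyn, hxz, ← renameLetters_apply d z n]⟩

theorem injective_renameLetters (hC : C.Nonempty)
    (hd : ∀ x ∈ C, ∀ n, BijOn (d (res x n)) univ (nextLetters C (res x n))) :
    Injective (renameLetters d) := by
  intro z z' h
  funext n
  obtain ⟨x, hx, hxz⟩ :=
    exists_mem_res_eq_res_renameLetters hC (fun x hx n => (hd x hx n).mapsTo) z n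
  refine (hd x hx n).injOn (mem_univ _) (mem_univ _) ?_
  rw [hxz, ← renameLetters_apply d z n, h, ← renameLetters_apply d z' n]

theorem range_renameLetters [TopologicalSpace A] [DiscreteTopology A] (hclosed : IsClosed C)
    (hC : C.Nonempty)
    (hd : ∀ x ∈ C, ∀ n, BijOn (d (res x n)) univ (nextLetters C (res x n))) :
    range (renameLetters d) = C := by
  refine Subset.antisymm (range_subset_iff.2 fun z => mem_of_forall_exists_res_eq hclosed <|
    exists_mem_res_eq_res_renameLetters hC (fun x hx n => (hd x hx n).mapsTo) z) fun x hx => ?_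
  have hletter : ∀ n, ∃ k, d (res x n) k = x n := fun n => by
    simpa using (hd x hx n).surjOn (mem_nextLetters_res.2 ⟨x, hx, rfl, rfl⟩)
  choose z hz using hletter
  have hword : ∀ n, renameWord d (res z n) = res x n := fun n => by
    induction n with
    | zero => rfl
    | succ n ih => rw [res_succ, renameWord, ih, hz, res_succ]
  exact ⟨z, funext fun n => by rw [renameLetters, hword, hz]⟩

end RenameLetters

theorem exists_continuous_injective_range_eq_of_nextLetters_equiv [TopologicalSpace A]
    [DiscreteTopology A] [TopologicalSpace K] [DiscreteTopology K] {C : Set (ℕ → A)}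
    (hclosed : IsClosed C) (hC : C.Nonempty)
    (hK : ∀ x ∈ C, ∀ n, Nonempty (K ≃ nextLetters C (res x n))) :
    ∃ g : (ℕ → K) → (ℕ → A), Continuous g ∧ Injective g ∧ range g = C := by
  have henum : ∀ s, ∃ d : K → A, Nonempty (K ≃ nextLetters C s) →
      BijOn d univ (nextLetters C s) := fun s => by
    by_cases hs : Nonempty (K ≃ nextLetters C s)
    · obtain ⟨e⟩ := hs
      refine ⟨fun k => e k, fun _ => ⟨fun k _ => (e k).2, ?_, fun a ha => ?_⟩⟩
      · exact (Subtype.val_injective.comp e.injective).injOn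
      · exact ⟨e.symm ⟨a, ha⟩, mem_univ _, by simp⟩
    · exact ⟨fun _ => hC.some 0, fun h => absurd h hs⟩
  choose d hd using henum
  have hd' : ∀ x ∈ C, ∀ n, BijOn (d (res x n)) univ (nextLetters C (res x n)) :=
    fun x hx n => hd _ (hK x hx n)
  exact ⟨renameLetters d, continuous_renameLetters d, injective_renameLetters hC hd',
    range_renameLetters hclosed hC hd'⟩

end Sequences

section Borel

theorem exists_continuous_bijective_of_partition {I Z W : Type*} [TopologicalSpace I]
    [DiscreteTopology I] [TopologicalSpace Z] [TopologicalSpace W] {S : I → Set W}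
    (hdisj : Pairwise (Disjoint on S)) (hcover : ⋃ i, S i = univ)
    (hS : ∀ i, ∃ g : Z → W, Continuous g ∧ Injective g ∧ range g = S i) :
    ∃ f : I × Z → W, Continuous f ∧ Bijective f := by
  choose g hcont hinj hrange using hS
  refine ⟨fun p => g p.1 p.2, continuous_prod_of_discrete_left.2 hcont, ?_, fun w => ?_⟩
  · rintro ⟨i, z⟩ ⟨j, z'⟩ (h : g i z = g j z')
    obtain rfl : i = j := hdisj.eq <| not_disjoint_iff.2
      ⟨g i z, hrange i ▸ mem_range_self z, h ▸ hrange j ▸ mem_range_self z'⟩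
    rw [hinj i h]
  · obtain ⟨i, hi⟩ := mem_iUnion.1 (hcover ▸ mem_univ w)
    obtain ⟨z, hz⟩ : w ∈ range (g i) := (hrange i).symm ▸ hi
    exact ⟨(i, z), hz⟩

/-- The identification of families of pairs with pairs of families, as a homeomorphism. -/
def arrowProdHomeomorph (ι A B : Type*) [TopologicalSpace A] [TopologicalSpace B] :
    (ι → A × B) ≃ₜ (ι → A) × (ι → B) where
  toEquiv := Equiv.arrowProdEquivProdArrow ι (fun _ => A) fun _ => B
  continuous_toFun := by
    change Continuous fun x : ι → A × B => (fun n => (x n).1, fun n => (x n).2)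
    fun_prop
  continuous_invFun := by
    change Continuous fun (p : (ι → A) × (ι → B)) n => (p.1 n, p.2 n)
    fun_prop

/-- The square of Baire space is homeomorphic to Baire space, by pairing entries with `Nat.pair`. -/
def baireProdBaireHomeomorph : (ℕ → ℕ) × (ℕ → ℕ) ≃ₜ (ℕ → ℕ) :=
  (arrowProdHomeomorph ℕ ℕ ℕ).symm.trans
    (Homeomorph.piCongrRight fun _ => Nat.pairEquiv.toHomeomorphOfDiscrete)

theorem exists_continuous_injective_range_eq_prod_univ_of_isClosed {A : Type*} [Countable A]
    [TopologicalSpace A] [DiscreteTopology A] {F : Set (ℕ → A)} (hF : IsClosed F)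
    (hne : F.Nonempty) :
    ∃ g : (ℕ → ℕ) → (ℕ → A) × (ℕ → ℕ), Continuous g ∧ Injective g ∧ range g = F ×ˢ univ := by
  let C : Set (ℕ → A × ℕ) := arrowProdHomeomorph ℕ A ℕ ⁻¹' F ×ˢ univ
  have hclosed : IsClosed C :=
    (hF.prod isClosed_univ).preimage (arrowProdHomeomorph ℕ A ℕ).continuous
  have hC : C.Nonempty :=
    (hne.prod univ_nonempty).preimage (arrowProdHomeomorph ℕ A ℕ).surjective
  have hbranch : ∀ x ∈ C, ∀ n, Nonempty (ℕ ≃ nextLetters C (res x n)) := fun x hx n => by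
    -- The second entry of a letter is unconstrained.
    have hfree : ∀ m : ℕ, ((x n).1, m) ∈ nextLetters C (res x n) := fun m => by
      refine mem_nextLetters_res.2 ⟨update x n ((x n).1, m), ⟨?_, mem_univ _⟩, ?_, by simp⟩
      · convert hx.1 using 1
        funext k
        obtain rfl | hk := eq_or_ne k n <;>
          simp [arrowProdHomeomorph, Equiv.arrowProdEquivProdArrow, *]
      · exact res_eq_res.2 fun k hk => update_of_ne hk.ne _ _
    have : Infinite (nextLetters C (res x n)) :=
      Infinite.of_injective (fun m => ⟨_, hfree m⟩) fun m m' h => by simpa using h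
    exact nonempty_equiv_of_countable
  obtain ⟨g, hcont, hinj, hrange⟩ :=
    exists_continuous_injective_range_eq_of_nextLetters_equiv hclosed hC hbranch
  refine ⟨arrowProdHomeomorph ℕ A ℕ ∘ g, (arrowProdHomeomorph ℕ A ℕ).continuous.comp hcont,
    (arrowProdHomeomorph ℕ A ℕ).injective.comp hinj, ?_⟩
  rw [range_comp, hrange, image_preimage_eq _ (arrowProdHomeomorph ℕ A ℕ).surjective]

theorem exists_continuous_injective_range_eq_prod_univ_of_measurableSet {A : Type*} [Countable A]
    [TopologicalSpace A] [DiscreteTopology A] [MeasurableSpace (ℕ → A)] [BorelSpace (ℕ → A)]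
    {s : Set (ℕ → A)} (hs : MeasurableSet s) (hne : s.Nonempty) :
    ∃ g : (ℕ → ℕ) → (ℕ → A) × (ℕ → ℕ), Continuous g ∧ Injective g ∧ range g = s ×ˢ univ := by
  obtain ⟨G, hG, hfst, rfl⟩ :=
    IsInjectiveProjection.of_measurableSet isTopologicalBasis_isClopen_sequences hs
  let e := arrowProdHomeomorph ℕ A ℕ
  obtain ⟨g, hcont, hinj, hrange⟩ := exists_continuous_injective_range_eq_prod_univ_of_isClosed
    (hG.preimage e.continuous) (hne.of_image.preimage e.surjective)
  refine ⟨Prod.map (Prod.fst ∘ e) id ∘ g, by fun_prop, ?_, ?_⟩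
  · refine injOn_univ.1 (InjOn.comp (t := range g) ?_ hinj.injOn fun z _ => mem_range_self z)
    rw [hrange]
    exact (hfst.comp e.injective.injOn (mapsTo_preimage _ _)).prodMap (injOn_id _)
  · rw [range_comp, hrange, prodMap_image_prod, image_comp, image_preimage_eq _ e.surjective,
      image_id]

theorem exists_continuous_bijective_of_measurable_partition {I : Type*} [TopologicalSpace I]
    [DiscreteTopology I] [MeasurableSpace (ℕ → ℕ)] [BorelSpace (ℕ → ℕ)] {B : I → Set (ℕ → ℕ)}
    (hdisj : Pairwise (Disjoint on B)) (hne : ∀ i, (B i).Nonempty) (hcover : ⋃ i, B i = univ)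
    (hB : ∀ i, MeasurableSet (B i)) :
    ∃ f : I × (ℕ → ℕ) → (ℕ → ℕ), Continuous f ∧ Bijective f := by
  have hdisj' : Pairwise (Disjoint on fun i => B i ×ˢ (univ : Set (ℕ → ℕ))) :=
    hdisj.mono fun i j h => disjoint_prod.2 (Or.inl h)
  have hcover' : ⋃ i, B i ×ˢ (univ : Set (ℕ → ℕ)) = univ := by
    rw [← iUnion_prod_const, hcover, univ_prod_univ]
  obtain ⟨f, hf, hbij⟩ := exists_continuous_bijective_of_partition hdisj' hcover' fun i =>
    exists_continuous_injective_range_eq_prod_univ_of_measurableSet (hB i) (hne i)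
  exact ⟨baireProdBaireHomeomorph ∘ f, baireProdBaireHomeomorph.continuous.comp hf,
    baireProdBaireHomeomorph.bijective.comp hbij⟩

end Borel

section Coloring

theorem exists_isLeast_strictUpperBound_of_aleph0_lt_cof {A ι : Type*} [LinearOrder A]
    [WellFoundedLT A] [Countable ι] (hcof : ℵ₀ < Order.cof A) (x : ι → A) :
    ∃ a, IsLeast {b | ∀ k, x k < b} a := by
  have hrange : ¬ IsCofinal (range x) := fun h =>
    (hcof.trans_le (Order.cof_le h)).not_ge <|
      Cardinal.mk_le_aleph0_iff.2 (countable_range x).to_subtype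
  have hbounded : {b | ∀ k, x k < b}.Nonempty := by
    simpa [IsCofinal, Set.Nonempty] using hrange
  exact ⟨_, WellFounded.min_mem wellFounded_lt _ hbounded,
    fun b hb => WellFounded.min_le wellFounded_lt hb⟩

theorem measurableSet_isLeast_strictUpperBound {A ι : Type*} [LinearOrder A] [MeasurableSpace A]
    [DiscreteMeasurableSpace A] [Countable ι] (a : A) :
    MeasurableSet {x : ι → A | IsLeast {b | ∀ k, x k < b} a} := by
  obtain hempty | ⟨x₀, hx₀⟩ := {x : ι → A | IsLeast {b | ∀ k, x k < b} a}.eq_empty_or_nonempty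
  · rw [hempty]
    exact MeasurableSet.empty
  -- The entries of `x₀` are countably many thresholds cofinal below `a`.
  have hcofinal : {x : ι → A | IsLeast {b | ∀ k, x k < b} a} =
      (⋂ k, {x | x k ∈ Iio a}) ∩ ⋂ j, ⋃ k, {x | x k ∈ Ici (x₀ j)} := by
    ext x
    simp only [mem_ofPred_eq, mem_inter_iff, mem_iInter, mem_iUnion, mem_Iio, mem_Ici]
    refine ⟨fun hx => ⟨hx.1, fun j => ?_⟩, fun ⟨hlt, hx⟩ => ⟨hlt, fun b hb => ?_⟩⟩
    · by_contra! hbelow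
      exact (hx₀.1 j).not_ge (hx.2 hbelow)
    · refine hx₀.2 fun j => ?_
      obtain ⟨k, hk⟩ := hx j
      exact hk.trans_lt (hb k)
  rw [hcofinal]
  exact (MeasurableSet.iInter fun k => measurable_pi_apply k .of_discrete).inter <|
    MeasurableSet.iInter fun j => MeasurableSet.iUnion fun k => measurable_pi_apply k .of_discrete

/-- A coloring `c` of the sequences in `A` with measurable color classes, in each of which all the
sequences take their entries in a common countable set `C`; thus each class lives in the Polish
space `ℕ → C`, although `ℕ → A` need not be separable. -/
def IsCountableAlphabetColoring {A L : Type*} [MeasurableSpace A] (c : (ℕ → A) → L) : Prop :=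
  ∀ l, MeasurableSet (c ⁻¹' {l}) ∧ ∃ C : Set A, C.Countable ∧ ∀ x, c x = l → ∀ k, x k ∈ C

theorem exists_isCountableAlphabetColoring_of_Iic {A : Type u} [LinearOrder A] [WellFoundedLT A]
    [MeasurableSpace A] [DiscreteMeasurableSpace A] (hcof : ℵ₀ < Order.cof A)
    {M : A → Type v} {c : ∀ a, (ℕ → Iic a) → M a} (hc : ∀ a, IsCountableAlphabetColoring (c a)) :
    ∃ c' : (ℕ → A) → Σ a, M a, IsCountableAlphabetColoring c' := by
  choose σ hσ using exists_isLeast_strictUpperBound_of_aleph0_lt_cof (ι := ℕ) hcof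
  refine ⟨fun x => ⟨σ x, c (σ x) (projIic (σ x) ∘ x)⟩, fun ⟨a, m⟩ => ?_⟩
  obtain ⟨hmeas, C, hC, hCc⟩ := hc a m
  have hfiber : (fun x => (⟨σ x, c (σ x) (projIic (σ x) ∘ x)⟩ : Σ a, M a)) ⁻¹' {⟨a, m⟩} =
      {x | IsLeast {b | ∀ k, x k < b} a} ∩ (fun x => projIic a ∘ x) ⁻¹' (c a ⁻¹' {m}) := by
    ext x
    simp only [mem_preimage, mem_singleton_iff, Sigma.mk.injEq, mem_inter_iff, mem_ofPred_eq]
    constructor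
    · rintro ⟨rfl, h⟩
      exact ⟨hσ x, eq_of_heq h⟩
    · rintro ⟨ha, rfl⟩
      obtain rfl := (hσ x).unique ha
      exact ⟨rfl, HEq.rfl⟩
  rw [hfiber]
  refine ⟨(measurableSet_isLeast_strictUpperBound a).inter <| hmeas.preimage <|
    measurable_pi_lambda _ fun k => (Measurable.of_discrete (f := projIic a)).comp
      (measurable_pi_apply k), Subtype.val '' C, hC.image _, fun x hx k => ?_⟩
  obtain ⟨⟨hlt, -⟩, hm⟩ := hfiber.subset hx
  exact ⟨projIic a (x k), hCc _ hm k, congrArg Subtype.val (projIic_of_mem (hlt k).le)⟩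

theorem exists_wellOrder_mk_Iic_le_of_mk_eq_succ {A : Type u} {κ : Cardinal.{u}} (hκ : ℵ₀ ≤ κ)
    (hA : #A = Order.succ κ) :
    ∃ (_ : LinearOrder A) (_ : WellFoundedLT A), ℵ₀ < Order.cof A ∧ ∀ a : A, #(Iic a) ≤ κ := by
  obtain ⟨_, _, hord⟩ := Cardinal.exists_ord_eq_type_lt A
  refine ⟨‹_›, ‹_›, ?_, fun a => ?_⟩
  · rw [← Ordinal.cof_type, ← hord, hA, (Cardinal.isRegular_succ hκ).cof_ord]
    exact Order.lt_succ_iff.2 hκ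
  · have hIio : #(Iio a) ≤ κ := Order.lt_succ_iff.1 (hA ▸ Cardinal.mk_Iio_lt a hord)
    rw [← Iio_insert]
    exact Cardinal.mk_insert_le.trans ((add_le_add_left hIio 1).trans (Cardinal.add_one_eq hκ).le)

theorem exists_isCountableAlphabetColoring_of_mk_le_aleph (n : ℕ) :
    ∀ (A : Type u) [MeasurableSpace A] [DiscreteMeasurableSpace A], #A ≤ ℵ_ n →
      ∃ (L : Type u) (c : (ℕ → A) → L), #L ≤ ℵ_ n ∧ IsCountableAlphabetColoring c := by
  induction n with
  | zero =>
    intro A _ _ hA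
    have : Countable A := Cardinal.mk_le_aleph0_iff.1 (by simpa using hA)
    exact ⟨PUnit, fun _ => PUnit.unit, by simp, fun _ =>
      ⟨by simp, Set.univ, countable_univ, fun x _ k => mem_univ (x k)⟩⟩
  | succ n ih =>
    intro A _ _ hA
    have hsucc : ℵ_ (n + 1 : ℕ) = Order.succ (ℵ_ n) := by
      rw [Cardinal.succ_aleph, Nat.cast_add_one]
    obtain hlt | heq := hA.lt_or_eq
    · obtain ⟨L, c, hL, hc⟩ := ih A (Order.lt_succ_iff.1 (hsucc ▸ hlt))
      exact ⟨L, c, hL.trans (hsucc ▸ Order.le_succ _), hc⟩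
    obtain ⟨_, _, hcof, hIic⟩ :=
      exists_wellOrder_mk_Iic_le_of_mk_eq_succ (Cardinal.aleph0_le_aleph n) (heq.trans hsucc)
    have hdiscrete : ∀ a : A, DiscreteMeasurableSpace (Iic a) := fun a =>
      ⟨fun s => ⟨_, .of_discrete, preimage_image_eq s Subtype.val_injective⟩⟩
    choose M c hM hc using fun a => ih (Iic a) (hIic a)
    obtain ⟨c', hc'⟩ := exists_isCountableAlphabetColoring_of_Iic hcof hc
    refine ⟨_, c', ?_, hc'⟩
    calc #(Σ a, M a) = Cardinal.sum fun a => #(M a) := Cardinal.mk_sigma M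
      _ ≤ Cardinal.sum fun _ : A => ℵ_ (n + 1 : ℕ) :=
        Cardinal.sum_le_sum _ _ fun a => (hM a).trans (hsucc ▸ Order.le_succ _)
      _ = ℵ_ (n + 1 : ℕ) := by
        rw [Cardinal.sum_const', heq, Cardinal.mul_eq_self (Cardinal.aleph0_le_aleph _)]

theorem IsCountableAlphabetColoring.exists_surjective {A L : Type u} [Infinite A]
    [MeasurableSpace A] [DiscreteMeasurableSpace A] {c : (ℕ → A) → L}
    (hc : IsCountableAlphabetColoring c) (hL : #L ≤ #A) :
    ∃ q : (ℕ → A) → A, Surjective q ∧ IsCountableAlphabetColoring q := by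
  -- Recording the first entry as well makes the number of colors exactly `#A`.
  let p : (ℕ → A) → A × L := fun x => (x 0, c x)
  have hcard : #(range p) = #A := by
    refine le_antisymm ((Cardinal.mk_set_le _).trans ?_) ?_
    · rw [Cardinal.mk_prod, Cardinal.lift_id, Cardinal.lift_id]
      exact (mul_le_mul_right hL _).trans_eq (Cardinal.mul_eq_self (Cardinal.infinite_iff.1 ‹_›))
    · refine Cardinal.mk_le_of_injective (f := fun a => ⟨_, mem_range_self (const ℕ a)⟩)
        fun a a' h => ?_
      exact congrArg (fun z : range p => z.1.1) h
  obtain ⟨e⟩ := Cardinal.eq.1 hcard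
  refine ⟨e ∘ rangeFactorization p, e.surjective.comp rangeFactorization_surjective, fun a => ?_⟩
  obtain ⟨hmeas, C, hC, hCc⟩ := hc (e.symm a).1.2
  have hfiber : e ∘ rangeFactorization p ⁻¹' {a} =
      {x | x 0 ∈ ({(e.symm a).1.1} : Set A)} ∩ c ⁻¹' {(e.symm a).1.2} := by
    ext x
    simp [← e.eq_symm_apply, Subtype.ext_iff, Prod.ext_iff, p]
  rw [hfiber]
  refine ⟨(measurable_pi_apply 0 .of_discrete).inter hmeas, C, hC, fun x hx => hCc x ?_⟩
  exact (hfiber.subset hx).2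

end Coloring

theorem measurableSet_image_of_forall_mem_polishSpace {ι A Y : Type*} [Countable ι]
    [TopologicalSpace A] [MeasurableSpace A] [BorelSpace A] [TopologicalSpace Y] [T2Space Y]
    [MeasurableSpace Y] [OpensMeasurableSpace Y] {C : Set A} [PolishSpace C]
    {P : Set (ι → A)} (hP : MeasurableSet P)
    (hPC : ∀ x ∈ P, ∀ k, x k ∈ C) {f : (ι → A) → Y} (hf : Continuous f) (hinj : InjOn f P) :
    MeasurableSet (f '' P) := by
  let incl : (ι → C) → ι → A := fun x k => x k
  have hrange : P ⊆ range incl := fun x hx => ⟨fun k => ⟨x k, hPC x hx k⟩, rfl⟩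
  have hincl : Injective incl := fun x y h => funext fun k => Subtype.ext (congrFun h k)
  have hmeas : Measurable incl := measurable_pi_lambda _ fun k =>
    measurable_subtype_coe.comp (measurable_pi_apply k)
  rw [← image_preimage_eq_of_subset hrange, ← image_comp]
  refine (hmeas hP).image_of_continuousOn_injOn
    (hf.comp (by fun_prop : Continuous incl)).continuousOn ?_
  exact hinj.comp hincl.injOn (mapsTo_preimage _ _)

theorem exists_measurable_partition_of_continuous_bijective {A : Type u} [TopologicalSpace A]
    [DiscreteTopology A] {n : ℕ} (hA : #A = ℵ_ n) {Y : Type v} [TopologicalSpace Y] [T2Space Y]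
    [MeasurableSpace Y] [OpensMeasurableSpace Y] {f : (ℕ → A) → Y} (hf : Continuous f)
    (hbij : Bijective f) :
    ∃ B : A → Set Y, Pairwise (Disjoint on B) ∧ (∀ a, (B a).Nonempty) ∧ ⋃ a, B a = univ ∧
      ∀ a, MeasurableSet (B a) := by
  let _ : MeasurableSpace A := ⊤
  have : Infinite A := Cardinal.infinite_iff.2 (hA ▸ Cardinal.aleph0_le_aleph n)
  obtain ⟨L, c, hL, hc⟩ := exists_isCountableAlphabetColoring_of_mk_le_aleph n A hA.le
  obtain ⟨q, hq, hqc⟩ := hc.exists_surjective (hL.trans_eq hA.symm)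
  refine ⟨fun a => f '' (q ⁻¹' {a}), fun a b hab => ?_, fun a => ?_, ?_, fun a => ?_⟩
  · exact (disjoint_image_iff hbij.injective).2 ((disjoint_singleton.2 hab).preimage q)
  · exact ((singleton_nonempty a).preimage hq).image f
  · rw [← image_iUnion, ← preimage_iUnion, iUnion_of_singleton, preimage_univ, image_univ,
      hbij.surjective.range_eq]
  · obtain ⟨hmeas, C, hC, hCq⟩ := hqc a
    have := hC.to_subtype
    exact measurableSet_image_of_forall_mem_polishSpace hmeas hCq hf hbij.injective.injOn

theorem stmt_13_general :
    (∀ (I : Type u) [TopologicalSpace I] [DiscreteTopology I] (B : I → Set (ℕ → ℕ)),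
      (Pairwise (Function.onFun Disjoint B) ∧ (∀ i, (B i).Nonempty) ∧
        (⋃ i, B i) = Set.univ ∧ ∀ i, @MeasurableSet _ (borel (ℕ → ℕ)) (B i)) →
      ∃ f : I × (ℕ → ℕ) → (ℕ → ℕ), Continuous f ∧ Function.Bijective f) ∧
    (∀ (n : ℕ) (A : Type v) [TopologicalSpace A] [DiscreteTopology A] (Y : Type w)
      [TopologicalSpace Y] [T2Space Y],
      Cardinal.mk A = Cardinal.aleph n →
      (∃ f : (ℕ → A) → Y, Continuous f ∧ Function.Bijective f) →
      ∃ B : A → Set Y, Pairwise (Function.onFun Disjoint B) ∧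
        (∀ a, (B a).Nonempty) ∧ (⋃ a, B a) = Set.univ ∧
        ∀ a, @MeasurableSet _ (borel Y) (B a)) := by
  refine ⟨fun I _ _ B ⟨hdisj, hne, hcover, hB⟩ => ?_, fun n A _ _ Y _ _ hA ⟨f, hf, hbij⟩ => ?_⟩
  · borelize (ℕ → ℕ)
    exact exists_continuous_bijective_of_measurable_partition hdisj hne hcover hB
  · borelize Y
    exact exists_measurable_partition_of_continuous_bijective hA hf hbij

/-- If ω^ω can be partitioned into κ Borel sets then there is a continuous bijection from
κ × ω^ω onto ω^ω; conversely, if there is a continuous bijection from ω_n^ω onto ω^ω,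
then ω^ω can be partitioned into ℵ_n Borel sets. -/
theorem stmt_13 :
    (∀ (I : Type) [TopologicalSpace I] [DiscreteTopology I] (B : I → Set (ℕ → ℕ)),
      (Pairwise (Function.onFun Disjoint B) ∧ (∀ i, (B i).Nonempty) ∧
        (⋃ i, B i) = Set.univ ∧ ∀ i, @MeasurableSet _ (borel (ℕ → ℕ)) (B i)) →
      ∃ f : I × (ℕ → ℕ) → (ℕ → ℕ), Continuous f ∧ Function.Bijective f) ∧
    (∀ (n : ℕ) (A : Type) [TopologicalSpace A] [DiscreteTopology A],
      Cardinal.mk A = Cardinal.aleph n →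
      (∃ f : (ℕ → A) → (ℕ → ℕ), Continuous f ∧ Function.Bijective f) →
      ∃ B : A → Set (ℕ → ℕ), Pairwise (Function.onFun Disjoint B) ∧
        (∀ a, (B a).Nonempty) ∧ (⋃ a, B a) = Set.univ ∧
        ∀ a, @MeasurableSet _ (borel (ℕ → ℕ)) (B a)) :=
  ⟨stmt_13_general.{0, 0, 0}.1, fun n A _ _ hA => stmt_13_general.{0, 0, 0}.2 n A _ hA⟩
end
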